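/- Quantitative subject reduction and subject expansion for checkers multi types: let t, t' be checkers terms with t →hch t'. (1) If π ▷ Γ ⊢^k t : L then there is a derivation π' ▷ Γ ⊢^{k'} t' : L with |π'| = |π| − 1; moreover k' = k − 1 if the step is an interaction head step (t →h⊛ t') and k' = k if it is a silent head step (t →hτ t'). (2) Conversely, if Γ ⊢^{k'} t' : L is derivable then Γ ⊢^{k} t : L is derivable for some k. -/

import Mathlib

set_option autoImplicit false

/-! ### Players -/

inductive Player : Type
  | white
  | black
deriving DecidableEq

/-- The opposite player. -/
def Player.op : Player → Player
  | .white => .black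
  | .black => .white

/-- `gamma p q` is `0` if the players agree (silent) and `1` otherwise (interaction). -/
def Player.gamma (p q : Player) : ℕ := if p = q then 0 else 1

/-! ### Ordinary λ-terms (de Bruijn representation) -/

inductive Lam : Type
  | var : ℕ → Lam
  | lam : Lam → Lam
  | app : Lam → Lam → Lam
deriving DecidableEq

namespace Lam

/-- Shift the free de Bruijn indices ≥ `d` by one. -/
def liftAt : Lam → ℕ → Lam
  | .var n, d => .var (if n < d then n else n + 1)
  | .lam t, d => .lam (t.liftAt (d + 1))
  | .app t u, d => .app (t.liftAt d) (u.liftAt d)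

/-- Capture-avoiding substitution of `u` for the de Bruijn index `x`. -/
def subst : Lam → ℕ → Lam → Lam
  | .var n, x, u => if n = x then u else if x < n then .var (n - 1) else .var n
  | .lam t, x, u => .lam (t.subst (x + 1) (u.liftAt 0))
  | .app t s, x, u => .app (t.subst x u) (s.subst x u)

end Lam

/-- Root β-rule: `(λx.t) u ↦ t[x:=u]`. -/
inductive LBetaRoot : Lam → Lam → Prop
  | beta (t u : Lam) : LBetaRoot (.app (.lam t) u) (t.subst 0 u)

/-- Root η-rule: `λx. t x ↦ t` with `x ∉ FV(t)` (enforced by the lifting). -/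
inductive LEtaRoot : Lam → Lam → Prop
  | eta (t : Lam) : LEtaRoot (.lam (.app (t.liftAt 0) (.var 0))) t

/-- Closure of a root relation under all contexts. -/
inductive LFull (R : Lam → Lam → Prop) : Lam → Lam → Prop
  | root {t u : Lam} : R t u → LFull R t u
  | lam {t u : Lam} : LFull R t u → LFull R (.lam t) (.lam u)
  | appL {t t' : Lam} (u : Lam) : LFull R t t' → LFull R (.app t u) (.app t' u)
  | appR (t : Lam) {u u' : Lam} : LFull R u u' → LFull R (.app t u) (.app t u')

/-- Closure under applicative spine contexts `⟨·⟩ t1 … tk`. -/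
inductive LSpine (R : Lam → Lam → Prop) : Lam → Lam → Prop
  | root {t u : Lam} : R t u → LSpine R t u
  | appL {t t' : Lam} (u : Lam) : LSpine R t t' → LSpine R (.app t u) (.app t' u)

/-- Closure under head contexts `λx1…xn.⟨·⟩ t1 … tk`. -/
inductive LHead (R : Lam → Lam → Prop) : Lam → Lam → Prop
  | spine {t u : Lam} : LSpine R t u → LHead R t u
  | lam {t u : Lam} : LHead R t u → LHead R (.lam t) (.lam u)

/-- β-reduction. -/
def LBeta : Lam → Lam → Prop := LFull LBetaRoot
/-- η-reduction. -/
def LEta : Lam → Lam → Prop := LFull LEtaRoot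
/-- Head reduction. -/
def LHStep : Lam → Lam → Prop := LHead LBetaRoot
/-- Multistep head reduction. -/
def LHSteps : Lam → Lam → Prop := Relation.ReflTransGen LHStep

/-- β-conversion (reflexive-symmetric-transitive closure of β-reduction). -/
def LBetaConv : Lam → Lam → Prop :=
  Relation.ReflTransGen (fun a b => LBeta a b ∨ LBeta b a)
/-- η-conversion. -/
def LEtaConv : Lam → Lam → Prop :=
  Relation.ReflTransGen (fun a b => LEta a b ∨ LEta b a)

/-- Head normal forms: no head step out of `t`. -/
def Lam.LHNF (t : Lam) : Prop := ∀ u, ¬ LHStep t u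

/-- Head convergence: `t ⇓h`. -/
def Lam.HConv (t : Lam) : Prop := ∃ h, LHSteps t h ∧ h.LHNF

/-- Ordinary contexts (one hole). -/
inductive LCtx : Type
  | hole : LCtx
  | lam : LCtx → LCtx
  | appL : LCtx → Lam → LCtx
  | appR : Lam → LCtx → LCtx

/-- Plugging (allowing variable capture). -/
def LCtx.fill : LCtx → Lam → Lam
  | .hole, t => t
  | .lam C, t => .lam (C.fill t)
  | .appL C u, t => .app (C.fill t) u
  | .appR s C, t => .app s (C.fill t)

/-- Head contextual preorder on λ-terms. -/
def CtxLe (t u : Lam) : Prop := ∀ C : LCtx, (C.fill t).HConv → (C.fill u).HConv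

/-! ### Checkers terms -/

inductive CTerm : Type
  | var : ℕ → CTerm
  | lam : Player → CTerm → CTerm
  | app : Player → CTerm → CTerm → CTerm
deriving DecidableEq

namespace CTerm

/-- Shift the free de Bruijn indices ≥ `d` by one. -/
def liftAt : CTerm → ℕ → CTerm
  | .var n, d => .var (if n < d then n else n + 1)
  | .lam p t, d => .lam p (t.liftAt (d + 1))
  | .app p t u, d => .app p (t.liftAt d) (u.liftAt d)

/-- Capture-avoiding substitution of `u` for the de Bruijn index `x`. -/
def subst : CTerm → ℕ → CTerm → CTerm
  | .var n, x, u => if n = x then u else if x < n then .var (n - 1) else .var n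
  | .lam p t, x, u => .lam p (t.subst (x + 1) (u.liftAt 0))
  | .app p t s, x, u => .app p (t.subst x u) (s.subst x u)

/-- The underlying ordinary λ-term of a checkers term. -/
def untag : CTerm → Lam
  | .var n => .var n
  | .lam _ t => .lam t.untag
  | .app _ t u => .app t.untag u.untag

end CTerm

/-- Player lifting: tag every abstraction and application with player `p`. -/
def Lam.tag : Lam → Player → CTerm
  | .var n, _ => .var n
  | .lam t, p => .lam p (t.tag p)
  | .app t u, p => .app p (t.tag p) (u.tag p)

/-- Silent β root rule: the abstraction and the application carry the same player. -/
inductive SilentRoot : CTerm → CTerm → Prop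
  | beta (p : Player) (t u : CTerm) : SilentRoot (.app p (.lam p t) u) (t.subst 0 u)

/-- Interaction β root rule: the application carries the opposite player of the abstraction. -/
inductive InterRoot : CTerm → CTerm → Prop
  | beta (p : Player) (t u : CTerm) : InterRoot (.app p.op (.lam p t) u) (t.subst 0 u)

/-- Closure of a root relation under all checkers contexts. -/
inductive CFull (R : CTerm → CTerm → Prop) : CTerm → CTerm → Prop
  | root {t u : CTerm} : R t u → CFull R t u
  | lam (p : Player) {t u : CTerm} : CFull R t u → CFull R (.lam p t) (.lam p u)
  | appL (p : Player) {t t' : CTerm} (u : CTerm) : CFull R t t' → CFull R (.app p t u) (.app p t' u)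
  | appR (p : Player) (t : CTerm) {u u' : CTerm} : CFull R u u' → CFull R (.app p t u) (.app p t u')

/-- Closure under applicative spine contexts `⟨·⟩ @_{q1} t1 … @_{qk} tk`. -/
inductive CSpine (R : CTerm → CTerm → Prop) : CTerm → CTerm → Prop
  | root {t u : CTerm} : R t u → CSpine R t u
  | appL (p : Player) {t t' : CTerm} (u : CTerm) : CSpine R t t' → CSpine R (.app p t u) (.app p t' u)

/-- Closure under checkers head contexts `λ_{p1}x1…λ_{pn}xn.⟨·⟩ @_{q1} t1 … @_{qk} tk`. -/
inductive CHead (R : CTerm → CTerm → Prop) : CTerm → CTerm → Prop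
  | spine {t u : CTerm} : CSpine R t u → CHead R t u
  | lam (p : Player) {t u : CTerm} : CHead R t u → CHead R (.lam p t) (.lam p u)

/-- Silent β-reduction `→τ`. -/
def StepTau : CTerm → CTerm → Prop := CFull SilentRoot
/-- Interaction β-reduction `→⊛`. -/
def StepInt : CTerm → CTerm → Prop := CFull InterRoot
/-- Checkers β-reduction `→βch`. -/
def StepBch (t u : CTerm) : Prop := StepTau t u ∨ StepInt t u

/-- Silent head reduction `→hτ`. -/
def HStepTau : CTerm → CTerm → Prop := CHead SilentRoot
/-- Interaction head reduction `→h⊛`. -/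
def HStepInt : CTerm → CTerm → Prop := CHead InterRoot
/-- Checkers head reduction `→hch`. -/
def HStepCh (t u : CTerm) : Prop := HStepTau t u ∨ HStepInt t u

/-- Checkers head normal form. -/
def CTerm.HNF (t : CTerm) : Prop := ∀ u, ¬ HStepCh t u

/-- `BigStep t k` means `t ⇓^k`: the (deterministic) checkers head evaluation of `t`
terminates and performs exactly `k` interaction steps. -/
inductive BigStep : CTerm → ℕ → Prop
  | nf {t : CTerm} : t.HNF → BigStep t 0
  | silent {t u : CTerm} {k : ℕ} : HStepTau t u → BigStep u k → BigStep t k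
  | inter {t u : CTerm} {k : ℕ} : HStepInt t u → BigStep u k → BigStep t (k + 1)

/-- `HRed t n i u`: a checkers head reduction sequence from `t` to `u` of length `n`
containing exactly `i` interaction steps. -/
inductive HRed : CTerm → ℕ → ℕ → CTerm → Prop
  | refl (t : CTerm) : HRed t 0 0 t
  | silent {t u s : CTerm} {n i : ℕ} : HStepTau t u → HRed u n i s → HRed t (n + 1) i s
  | inter {t u s : CTerm} {n i : ℕ} : HStepInt t u → HRed u n i s → HRed t (n + 1) (i + 1) s

/-- Checkers contexts (one hole). -/
inductive CCtx : Type
  | hole : CCtx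
  | lam : Player → CCtx → CCtx
  | appL : Player → CCtx → CTerm → CCtx
  | appR : Player → CTerm → CCtx → CCtx

/-- Plugging (allowing variable capture). -/
def CCtx.fill : CCtx → CTerm → CTerm
  | .hole, t => t
  | .lam p C, t => .lam p (C.fill t)
  | .appL p C u, t => .app p (C.fill t) u
  | .appR p s C, t => .app p s (C.fill t)

/-- Player lifting of ordinary contexts. -/
def LCtx.tag : LCtx → Player → CCtx
  | .hole, _ => .hole
  | .lam C, p => .lam p (C.tag p)
  | .appL C u, p => .appL p (C.tag p) (u.tag p)
  | .appR s C, p => .appR p (s.tag p) (C.tag p)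

/-- Checkers interaction preorder `≼ctx⊛` on checkers terms. -/
def IntCtxLe (t u : CTerm) : Prop :=
  ∀ (C : CCtx) (k : ℕ), BigStep (C.fill t) k → BigStep (C.fill u) k

/-- Checkers interaction improvement `≼imp⊛` on checkers terms. -/
def ImpCtxLe (t u : CTerm) : Prop :=
  ∀ (C : CCtx) (k : ℕ), BigStep (C.fill t) k → ∃ k', k' ≤ k ∧ BigStep (C.fill u) k'

/-- Interaction preorder `⊑int` on ordinary λ-terms, via black lifting. -/
def IntLe (t u : Lam) : Prop := IntCtxLe (t.tag .black) (u.tag .black)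

/-- Interaction improvement `⊑int·imp` on ordinary λ-terms, via black lifting. -/
def ImpLe (t u : Lam) : Prop := ImpCtxLe (t.tag .black) (u.tag .black)

/-- Interaction equivalence `≡int`. -/
def IntEq (t u : Lam) : Prop := IntLe t u ∧ IntLe u t

/-- Silent conversion `=τ`: reflexive-symmetric-transitive closure of `→τ`. -/
def SilentConv : CTerm → CTerm → Prop :=
  Relation.ReflTransGen (fun a b => StepTau a b ∨ StepTau b a)


/-! ### Checkers multi types -/

/-- Linear types: an atom `X` and arrows `M →_{p,q} L`, where a multi type `M`
is a finite multiset of linear types (syntactically represented as a list). -/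
inductive LType : Type
  | atom : LType
  | arrow : List LType → Player → Player → LType → LType

/-- Type environments: a multi type for every de Bruijn index. -/
abbrev TEnv : Type := ℕ → Multiset LType

/-- The empty type environment. -/
def TEnv.zero : TEnv := fun _ => 0

/-- Pointwise multiset union of type environments. -/
def TEnv.add (Γ Δ : TEnv) : TEnv := fun n => Γ n + Δ n

/-- The environment assigning `[L]` to `x` and `0` elsewhere. -/
def TEnv.single (x : ℕ) (L : LType) : TEnv := fun n => if n = x then {L} else 0

/-- Extend an environment with a multi type for the freshly bound de Bruijn index `0`. -/
def TEnv.cons (M : Multiset LType) (Γ : TEnv) : TEnv := fun n =>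
  match n with
  | 0 => M
  | n + 1 => Γ n

mutual
  /-- Type derivations `π ▷ Γ ⊢^k t : L` of the checkers multi type system. -/
  inductive Deriv : TEnv → ℕ → CTerm → LType → Type
    | ax (x : ℕ) (L : LType) : Deriv (TEnv.single x L) 0 (.var x) L
    | lam {Γ : TEnv} {k : ℕ} {t : CTerm} {L : LType} (p q : Player) (M : List LType) :
        Deriv (TEnv.cons (Multiset.ofList M) Γ) k t L →
        Deriv Γ k (.lam p t) (.arrow M p q L)
    | app {Γ Δ : TEnv} {k₁ k₂ : ℕ} {t u : CTerm} {M : List LType} {p q : Player} {L : LType} :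
        Deriv Γ k₁ t (.arrow M p q L) → DerivM Δ k₂ u M →
        Deriv (TEnv.add Γ Δ) (k₁ + k₂ + Player.gamma p q) (.app q t u) L
  /-- Derivations `Γ ⊢^k t : M` of a multi type (the `many` rule). -/
  inductive DerivM : TEnv → ℕ → CTerm → List LType → Type
    | nil (t : CTerm) : DerivM TEnv.zero 0 t []
    | cons {Γ Δ : TEnv} {k k' : ℕ} {t : CTerm} {L : LType} {M : List LType} :
        Deriv Γ k t L → DerivM Δ k' t M → DerivM (TEnv.add Γ Δ) (k + k') t (L :: M)
end

mutual
  /-- The (applicative) size `|π|` of a derivation: its number of `@` rules. -/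
  def Deriv.size {Γ : TEnv} {k : ℕ} {t : CTerm} {L : LType} : Deriv Γ k t L → ℕ
    | .ax _ _ => 0
    | .lam _ _ _ π => Deriv.size π
    | .app π μ => Deriv.size π + DerivM.size μ + 1
  /-- Size of a multi-type derivation. -/
  def DerivM.size {Γ : TEnv} {k : ℕ} {t : CTerm} {M : List LType} : DerivM Γ k t M → ℕ
    | .nil _ => 0
    | .cons π μ => Deriv.size π + DerivM.size μ
end

/-- Typability `Γ ⊢^k t : L`. -/
def TJ (Γ : TEnv) (k : ℕ) (t : CTerm) (L : LType) : Prop := Nonempty (Deriv Γ k t L)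

/-- Checkers relational interpretation `⟦t⟧⊛ = {(Γ, k, L) | Γ ⊢^k t : L}`. -/
def CSem (t : CTerm) : Set (TEnv × ℕ × LType) := {x | TJ x.1 x.2.1 t x.2.2}

/-- Black type preorder `⊑•type` on ordinary λ-terms. -/
def BTypeLe (t u : Lam) : Prop := CSem (t.tag .black) ⊆ CSem (u.tag .black)

/-! ### Tight typings -/

/-- All arrows occurring in a linear type are silent (`p = q`). -/
inductive AllSilent : LType → Prop
  | atom : AllSilent .atom
  | arrow {M : List LType} {p : Player} {L : LType} :
      (∀ L' ∈ M, AllSilent L') → AllSilent L → AllSilent (.arrow M p p L)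

/-- The number of nonempty multi types occurring in a linear type. -/
def LType.neCount : LType → ℕ
  | .atom => 0
  | .arrow M _ _ L =>
      min M.length 1 + (M.attach.map fun x => LType.neCount x.1).sum + LType.neCount L
decreasing_by
  · have := List.sizeOf_lt_of_mem x.2
    simp only [LType.arrow.sizeOf_spec]
    omega
  · simp only [LType.arrow.sizeOf_spec]
    omega

/-- The number of nonempty multi types occurring in a multi type (counting itself). -/
def mNeCount (m : Multiset LType) : ℕ :=
  min (Multiset.card m) 1 + (m.map LType.neCount).sum

/-- A typing `(Γ, L)` is tight when all the multi types occurring in `Γ` and `L`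
are empty except for exactly one, and all arrows occurring in `(Γ, L)` are silent. -/
def Tight (Γ : TEnv) (L : LType) : Prop :=
  AllSilent L ∧ (∀ n : ℕ, ∀ L' ∈ Γ n, AllSilent L') ∧
    ∃ S : Finset ℕ, (∀ n : ℕ, n ∉ S → Γ n = 0) ∧
      (∑ n ∈ S, mNeCount (Γ n)) + LType.neCount L = 1

/-! A derivation `Γ ⊢^k t : L` of size `n` is recorded by its weight `(Γ, k, n)`, an element of a
commutative monoid in which every typing rule acts by addition. The set of weights of the
derivations of a term is then computed by structural recursion on the term. A derivation of `t`
assigning `m` to the variable `x` consumes one derivation of `u` for each element of `m`, so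
substitution maps the weights of `t` to sets of weights. This map is additive, hence commutes with
the rules. Contracting a β-redex removes exactly one `@` rule, whose weight is additive too, and
head contexts commute with adding it. -/

/-- The β root rule indexed by its number `k` of interactions: it is `SilentRoot` for `k = 0` and
`InterRoot` for `k = 1`. -/
inductive BetaRoot : ℕ → CTerm → CTerm → Prop
  | beta (p q : Player) (t u : CTerm) : BetaRoot (p.gamma q) (.app q (.lam p t) u) (t.subst 0 u)

theorem Player.gamma_self (p : Player) : p.gamma p = 0 := if_pos rfl

theorem Player.gamma_op (p : Player) : p.gamma p.op = 1 := by
  cases p <;> rfl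

theorem SilentRoot.betaRoot {t u : CTerm} : SilentRoot t u → BetaRoot 0 t u
  | .beta p t u => p.gamma_self ▸ .beta p p t u

theorem InterRoot.betaRoot {t u : CTerm} : InterRoot t u → BetaRoot 1 t u
  | .beta p t u => p.gamma_op ▸ .beta p p.op t u

theorem CSpine.mono {R S : CTerm → CTerm → Prop} (hRS : ∀ {t u}, R t u → S t u) {t u : CTerm}
    (h : CSpine R t u) : CSpine S t u := by
  induction h with
  | root h => exact .root (hRS h)
  | appL p s _ ih => exact .appL p s ih

theorem CHead.mono {R S : CTerm → CTerm → Prop} (hRS : ∀ {t u}, R t u → S t u) {t u : CTerm}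
    (h : CHead R t u) : CHead S t u := by
  induction h with
  | spine h => exact .spine (h.mono hRS)
  | lam p _ ih => exact .lam p ih

theorem CSpine.betaRoot_not_lam {k : ℕ} {p : Player} {t u : CTerm} :
    ¬ CSpine (BetaRoot k) (.lam p t) u
  | .root h => nomatch h

theorem CSpine.interactions_unique {j k : ℕ} {t u v : CTerm} (hj : CSpine (BetaRoot j) t u)
    (hk : CSpine (BetaRoot k) t v) : j = k := by
  induction hj generalizing v with
  | root hj =>
    obtain ⟨p, q, t, u⟩ := hj
    cases hk with
    | root hk => cases hk; rfl
    | appL _ _ hk => exact absurd hk betaRoot_not_lam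
  | appL q s hj ih =>
    cases hk with
    | root hk => cases hk; exact absurd hj betaRoot_not_lam
    | appL _ _ hk => exact ih hk

theorem CHead.interactions_unique {j k : ℕ} {t u v : CTerm} (hj : CHead (BetaRoot j) t u)
    (hk : CHead (BetaRoot k) t v) : j = k := by
  induction hj generalizing v with
  | spine hj =>
    cases hk with
    | spine hk => exact hj.interactions_unique hk
    | lam _ _ => exact absurd hj CSpine.betaRoot_not_lam
  | lam p _ ih =>
    cases hk with
    | spine hk => exact absurd hk CSpine.betaRoot_not_lam
    | lam _ hk => exact ih hk

section Interpretation

open scoped Pointwise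

/-- The weight `(Γ, k, n)` of a derivation of `Γ ⊢^k t : L` of size `n`. As a product of additive
commutative monoids, weights are added componentwise. -/
abbrev Weight : Type := TEnv × ℕ × ℕ

namespace Weight

/-- The weight of the `ax` rule `x : [L] ⊢^0 x : L`. -/
def ax (x : ℕ) (L : LType) : Weight := (TEnv.single x L, 0, 0)

/-- The weight contributed by one `@` rule counted as `k` interactions. -/
def app (k : ℕ) : Weight := (0, k, 1)

/-- Extends the environment of a weight with a multi type for the de Bruijn index `0`. -/
def cons (M : Multiset LType) (w : Weight) : Weight := (TEnv.cons M w.1, w.2)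

/-- Removes the index `x` from the environment of a weight, renumbering the indices above it. -/
def drop (x : ℕ) : Weight →+ Weight where
  toFun w := (fun n => w.1 (if n < x then n else n + 1), w.2)
  map_zero' := rfl
  map_add' _ _ := rfl

/-- Inserts the empty multi type at index `d` of the environment of a weight; the counterpart of
`CTerm.liftAt`. -/
def lift (d : ℕ) : Weight →+ Weight where
  toFun w := (fun n => if n < d then w.1 n else if n = d then 0 else w.1 (n - 1), w.2)
  map_zero' := by
    ext n <;> simp
  map_add' v w := by
    refine Prod.ext (funext fun n => ?_) rfl
    simp only [Prod.fst_add, Pi.add_apply]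
    split_ifs <;> simp

theorem exists_eq_cons (w : Weight) : ∃ M v, w = cons M v := by
  refine ⟨w.1 0, drop 0 w, Prod.ext (funext fun n => ?_) rfl⟩
  cases n <;> rfl

theorem cons_inj {M N : Multiset LType} {v w : Weight} :
    cons M v = cons N w ↔ M = N ∧ v = w := by
  refine ⟨fun h => ⟨congrFun (congrArg Prod.fst h) 0, congrArg (drop 0) h⟩, ?_⟩
  rintro ⟨rfl, rfl⟩
  rfl

theorem cons_add_cons (M N : Multiset LType) (v w : Weight) :
    cons M v + cons N w = cons (M + N) (v + w) := by
  refine Prod.ext (funext fun n => ?_) rfl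
  cases n <;> rfl

theorem app_eq_cons (k : ℕ) : app k = cons 0 (app k) := by
  refine Prod.ext (funext fun n => ?_) rfl
  cases n <;> rfl

theorem drop_succ_cons (x : ℕ) (M : Multiset LType) (w : Weight) :
    drop (x + 1) (cons M w) = cons M (drop x w) := by
  refine Prod.ext (funext fun n => ?_) rfl
  cases n with
  | zero => rfl
  | succ n =>
    simp only [drop, cons, TEnv.cons, AddMonoidHom.coe_mk, ZeroHom.coe_mk, add_lt_add_iff_right]
    split_ifs <;> rfl

theorem lift_zero (w : Weight) : lift 0 w = cons 0 w := by
  refine Prod.ext (funext fun n => ?_) rfl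
  cases n <;> rfl

theorem lift_succ_cons (d : ℕ) (M : Multiset LType) (w : Weight) :
    lift (d + 1) (cons M w) = cons M (lift d w) := by
  refine Prod.ext (funext fun n => ?_) rfl
  rcases n with _ | _ | n <;> rcases d with _ | d <;> simp [lift, cons, TEnv.cons]

theorem lift_app (d k : ℕ) : lift d (app k) = app k := by
  refine Prod.ext (funext fun n => ?_) rfl
  simp [lift, app]

theorem lift_ax (d y : ℕ) (L : LType) :
    lift d (ax y L) = ax (if y < d then y else y + 1) L := by
  refine Prod.ext (funext fun n => ?_) rfl
  simp only [lift, ax, TEnv.single, AddMonoidHom.coe_mk, ZeroHom.coe_mk]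
  grind

theorem drop_ax_self (x : ℕ) (L : LType) : drop x (ax x L) = 0 := by
  refine Prod.ext (funext fun n => ?_) rfl
  simp only [drop, ax, TEnv.single, AddMonoidHom.coe_mk, ZeroHom.coe_mk, Prod.fst_zero,
    Pi.zero_apply]
  grind

theorem drop_ax_of_lt {x y : ℕ} (h : y < x) (L : LType) : drop x (ax y L) = ax y L := by
  refine Prod.ext (funext fun n => ?_) rfl
  simp only [drop, ax, TEnv.single, AddMonoidHom.coe_mk, ZeroHom.coe_mk]
  grind

theorem drop_ax_of_gt {x y : ℕ} (h : x < y) (L : LType) : drop x (ax y L) = ax (y - 1) L := by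
  refine Prod.ext (funext fun n => ?_) rfl
  simp only [drop, ax, TEnv.single, AddMonoidHom.coe_mk, ZeroHom.coe_mk]
  grind

theorem preimage_cons_image_lift (d : ℕ) (M : Multiset LType) (A : Set Weight) :
    cons M ⁻¹' (lift (d + 1) '' A) = lift d '' (cons M ⁻¹' A) := by
  ext w
  constructor
  · rintro ⟨v, hv, h⟩
    obtain ⟨N, v, rfl⟩ := v.exists_eq_cons
    obtain ⟨rfl, rfl⟩ := cons_inj.1 ((lift_succ_cons d N v).symm.trans h)
    exact ⟨v, hv, rfl⟩
  · rintro ⟨v, hv, rfl⟩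
    exact ⟨cons M v, hv, lift_succ_cons d M v⟩

theorem preimage_cons_add_app (k : ℕ) (M : Multiset LType) (A : Set Weight) :
    cons M ⁻¹' (A + {app k}) = cons M ⁻¹' A + {app k} := by
  ext w
  simp only [Set.add_singleton, Set.mem_preimage, Set.mem_image]
  constructor
  · rintro ⟨v, hv, h⟩
    obtain ⟨N, v, rfl⟩ := v.exists_eq_cons
    rw [app_eq_cons, cons_add_cons, add_zero] at h
    obtain ⟨rfl, rfl⟩ := cons_inj.1 h
    exact ⟨v, hv, rfl⟩
  · rintro ⟨v, hv, rfl⟩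
    refine ⟨cons M v, hv, ?_⟩
    rw [app_eq_cons, cons_add_cons, add_zero, ← app_eq_cons]

end Weight

variable {Γ Δ : TEnv} {k l : ℕ} {t u : CTerm} {L : LType} {M : List LType}

/-- The weight `(Γ, k, |π|)` of a derivation `π ▷ Γ ⊢^k t : L`. -/
def Deriv.weight (π : Deriv Γ k t L) : Weight := (Γ, k, π.size)

/-- The weight `(Γ, k, |μ|)` of a derivation `μ ▷ Γ ⊢^k t : M` of a multi type. -/
def DerivM.weight (μ : DerivM Γ k t M) : Weight := (Γ, k, μ.size)

theorem Deriv.weight_ax (x : ℕ) (L : LType) : (Deriv.ax x L).weight = Weight.ax x L := by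
  rw [weight, size]
  rfl

theorem Deriv.weight_lam {p q : Player} (π : Deriv (TEnv.cons M Γ) k t L) :
    (Deriv.lam p q M π).weight.cons M = π.weight := by
  rw [weight, size]
  rfl

theorem Deriv.weight_app {p q : Player} (π : Deriv Γ k t (.arrow M p q L)) (μ : DerivM Δ l u M) :
    (Deriv.app π μ).weight = π.weight + μ.weight + Weight.app (p.gamma q) := by
  rw [weight, size]
  exact Prod.ext (add_zero (Γ + Δ)).symm rfl

theorem DerivM.weight_nil (t : CTerm) : (DerivM.nil t).weight = 0 := by
  rw [weight, size]
  rfl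

theorem DerivM.weight_cons (π : Deriv Γ k t L) (μ : DerivM Δ l t M) :
    (DerivM.cons π μ).weight = π.weight + μ.weight := by
  rw [weight, size]
  rfl

namespace CTerm

/-- The weights of the derivations of `t : L`. -/
def typings (t : CTerm) (L : LType) : Set Weight :=
  {w | ∃ (Γ : TEnv) (k : ℕ) (π : Deriv Γ k t L), π.weight = w}

/-- The weights of the derivations of `t : m` ending with the `many` rule, as a Minkowski sum, so
that they do not depend on an enumeration of the multi type `m`. -/
def multiTypings (t : CTerm) (m : Multiset LType) : Set Weight := (m.map t.typings).sum

theorem multiTypings_zero (t : CTerm) : t.multiTypings 0 = {0} := by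
  rw [multiTypings, Multiset.map_zero, Multiset.sum_zero, Set.singleton_zero]

theorem multiTypings_singleton (t : CTerm) (L : LType) : t.multiTypings {L} = t.typings L := by
  rw [multiTypings, Multiset.map_singleton, Multiset.sum_singleton]

theorem multiTypings_add (t : CTerm) (m n : Multiset LType) :
    t.multiTypings (m + n) = t.multiTypings m + t.multiTypings n := by
  rw [multiTypings, Multiset.map_add, Multiset.sum_add]
  rfl

theorem multiTypings_cons (t : CTerm) (L : LType) (m : Multiset LType) :
    t.multiTypings (L ::ₘ m) = t.typings L + t.multiTypings m := by
  rw [multiTypings, Multiset.map_cons, Multiset.sum_cons]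
  rfl

theorem mem_multiTypings_coe {w : Weight} :
    w ∈ t.multiTypings M ↔ ∃ (Γ : TEnv) (k : ℕ) (μ : DerivM Γ k t M), μ.weight = w := by
  induction M generalizing w with
  | nil =>
    rw [Multiset.coe_nil, multiTypings_zero, Set.mem_singleton_iff]
    constructor
    · rintro rfl
      exact ⟨_, _, .nil t, DerivM.weight_nil t⟩
    · rintro ⟨_, _, ⟨⟩, rfl⟩
      exact DerivM.weight_nil t
  | cons L M ih =>
    rw [← Multiset.cons_coe, multiTypings_cons, Set.mem_add]
    simp only [ih]
    constructor
    · rintro ⟨_, ⟨_, _, π, rfl⟩, _, ⟨_, _, μ, rfl⟩, rfl⟩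
      exact ⟨_, _, .cons π μ, DerivM.weight_cons π μ⟩
    · rintro ⟨_, _, μ, rfl⟩
      cases μ with
      | cons π μ => exact ⟨_, ⟨_, _, π, rfl⟩, _, ⟨_, _, μ, rfl⟩, (DerivM.weight_cons π μ).symm⟩

theorem typings_var (x : ℕ) (L : LType) : (var x).typings L = {Weight.ax x L} := by
  ext w
  constructor
  · rintro ⟨_, _, ⟨⟩, rfl⟩
    exact Deriv.weight_ax x L
  · rintro rfl
    exact ⟨_, _, .ax x L, Deriv.weight_ax x L⟩

theorem typings_lam (p : Player) (t : CTerm) (T : LType) :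
    (lam p t).typings T =
      ⋃ (M : List LType) (q : Player) (L : LType) (_ : T = .arrow M p q L),
        Weight.cons M ⁻¹' t.typings L := by
  ext ⟨Γ, k, n⟩
  simp only [Set.mem_iUnion, Set.mem_preimage]
  constructor
  · rintro ⟨_, _, π, h⟩
    cases π with
    | lam _ q M π => exact ⟨M, q, _, rfl, _, _, π, by rw [← h, Deriv.weight_lam]⟩
  · rintro ⟨M, q, L, rfl, _, _, π, h⟩
    obtain ⟨rfl, rfl, rfl⟩ := by simpa only [Deriv.weight, Weight.cons, Prod.mk.injEq] using h
    exact ⟨Γ, _, .lam p q M π, by rw [Deriv.weight, Deriv.size]⟩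

theorem typings_app (q : Player) (t u : CTerm) (L : LType) :
    (app q t u).typings L =
      ⋃ (M : List LType) (p : Player),
        t.typings (.arrow M p q L) + u.multiTypings M + {Weight.app (p.gamma q)} := by
  ext w
  simp only [Set.mem_iUnion, Set.add_singleton, Set.mem_image, Set.mem_add, mem_multiTypings_coe]
  constructor
  · rintro ⟨_, _, π, rfl⟩
    cases π with
    | app π μ =>
      exact ⟨_, _, _, ⟨_, ⟨_, _, π, rfl⟩, _, ⟨_, _, μ, rfl⟩, rfl⟩, (π.weight_app μ).symm⟩
  · rintro ⟨M, p, _, ⟨_, ⟨_, _, π, rfl⟩, _, ⟨_, _, μ, rfl⟩, rfl⟩, rfl⟩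
    exact ⟨_, _, .app π μ, π.weight_app μ⟩

theorem multiTypings_liftAt_of_typings {d : ℕ}
    (h : ∀ L, (t.liftAt d).typings L = Weight.lift d '' t.typings L) (m : Multiset LType) :
    (t.liftAt d).multiTypings m = Weight.lift d '' t.multiTypings m := by
  simp only [multiTypings, Set.image_multiset_sum, Multiset.map_map, Function.comp_def, ← h]

theorem typings_liftAt (t : CTerm) (d : ℕ) (L : LType) :
    (t.liftAt d).typings L = Weight.lift d '' t.typings L := by
  induction t generalizing d L with
  | var y => rw [liftAt, typings_var, typings_var, Set.image_singleton, Weight.lift_ax]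
  | lam p t ih =>
    simp only [liftAt, typings_lam, ih, Set.image_iUnion, Weight.preimage_cons_image_lift]
  | app q t s iht ihs =>
    simp only [liftAt, typings_app, iht, multiTypings_liftAt_of_typings (ihs d), Set.image_iUnion,
      Set.image_add, Set.image_singleton, Weight.lift_app]

theorem multiTypings_liftAt (t : CTerm) (d : ℕ) (m : Multiset LType) :
    (t.liftAt d).multiTypings m = Weight.lift d '' t.multiTypings m :=
  multiTypings_liftAt_of_typings (t.typings_liftAt d) m

end CTerm

section BiUnionHom

variable {α β : Type*} [AddZeroClass α] [AddZeroClass β]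

/-- The additive extension to sets of an additive map into sets: the Kleisli extension of the
powerset monad. -/
def biUnionHom (φ : α →+ Set β) : Set α →+ Set β where
  toFun A := ⋃ a ∈ A, φ a
  map_zero' := by rw [← Set.singleton_zero, Set.biUnion_singleton, map_zero]
  map_add' A B := by
    simp_rw [← Set.image2_add (s := A), Set.biUnion_image2, map_add]
    rw [Set.iUnion₂_add]
    simp_rw [Set.add_iUnion₂]

theorem mem_biUnionHom {φ : α →+ Set β} {A : Set α} {b : β} :
    b ∈ biUnionHom φ A ↔ ∃ a ∈ A, b ∈ φ a := by
  simp [biUnionHom]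

theorem biUnionHom_singleton (φ : α →+ Set β) (a : α) : biUnionHom φ {a} = φ a :=
  Set.biUnion_singleton a φ

theorem biUnionHom_iUnion {ι : Sort*} (φ : α →+ Set β) (A : ι → Set α) :
    biUnionHom φ (⋃ i, A i) = ⋃ i, biUnionHom φ (A i) :=
  Set.biUnion_iUnion A φ

end BiUnionHom

namespace CTerm

/-- The weights of the derivations obtained by substituting `u` for the index `x` in a derivation
of weight `w`: the multi type of `x` is replaced by one derivation of `u` for each of its elements.
-/
def substWeight (x : ℕ) (u : CTerm) : Weight →+ Set Weight where
  toFun w := {Weight.drop x w} + u.multiTypings (w.1 x)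
  map_zero' := by
    rw [map_zero, Prod.fst_zero, Pi.zero_apply, multiTypings_zero, Set.singleton_zero, add_zero]
  map_add' v w := by
    rw [map_add, Prod.fst_add, Pi.add_apply, multiTypings_add, ← Set.singleton_add_singleton,
      add_add_add_comm]

theorem substWeight_apply (x : ℕ) (u : CTerm) (w : Weight) :
    substWeight x u w = {Weight.drop x w} + u.multiTypings (w.1 x) := rfl

theorem substWeight_app (x : ℕ) (u : CTerm) (k : ℕ) :
    substWeight x u (.app k) = {Weight.app k} := by
  change {Weight.app k} + u.multiTypings 0 = _
  rw [multiTypings_zero, Set.singleton_zero, add_zero]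

theorem typings_subst_var (y x : ℕ) (u : CTerm) (L : LType) :
    ((var y).subst x u).typings L = substWeight x u (.ax y L) := by
  have env_ax (h : y ≠ x) : (Weight.ax y L).1 x = 0 := if_neg h.symm
  rw [substWeight_apply, subst]
  rcases lt_trichotomy y x with h | rfl | h
  · rw [if_neg h.ne, if_neg h.not_gt, env_ax h.ne, multiTypings_zero, Weight.drop_ax_of_lt h,
      typings_var, Set.singleton_zero, add_zero]
  · have env_ax_self : (Weight.ax y L).1 y = {L} := if_pos rfl
    rw [if_pos rfl, env_ax_self, multiTypings_singleton, Weight.drop_ax_self, Set.singleton_zero,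
      zero_add]
  · rw [if_neg h.ne', if_pos h, env_ax h.ne', multiTypings_zero, Weight.drop_ax_of_gt h,
      typings_var, Set.singleton_zero, add_zero]

theorem substWeight_succ_cons (x : ℕ) (u : CTerm) (M : Multiset LType) (w : Weight) :
    substWeight (x + 1) (u.liftAt 0) (w.cons M) = Weight.cons M '' substWeight x u w := by
  have cons_add (v : Weight) : (w.drop x).cons M + v.cons 0 = (w.drop x + v).cons M := by
    rw [Weight.cons_add_cons, add_zero]
  simp only [substWeight_apply, Weight.drop_succ_cons, multiTypings_liftAt, Set.singleton_add,
    Set.image_image, Weight.lift_zero, cons_add]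
  rfl

theorem preimage_cons_biUnionHom_substWeight (x : ℕ) (u : CTerm) (M : Multiset LType)
    (A : Set Weight) :
    Weight.cons M ⁻¹' biUnionHom (substWeight (x + 1) (u.liftAt 0)) A =
      biUnionHom (substWeight x u) (Weight.cons M ⁻¹' A) := by
  ext w
  simp only [mem_biUnionHom, Set.mem_preimage]
  constructor
  · rintro ⟨v, hv, hw⟩
    obtain ⟨N, v, rfl⟩ := v.exists_eq_cons
    rw [substWeight_succ_cons] at hw
    obtain ⟨w', hw', h⟩ := hw
    obtain ⟨rfl, rfl⟩ := Weight.cons_inj.1 h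
    exact ⟨v, hv, hw'⟩
  · rintro ⟨v, hv, hw⟩
    exact ⟨v.cons M, hv, substWeight_succ_cons x u M v ▸ Set.mem_image_of_mem _ hw⟩

theorem multiTypings_subst_of_typings {x : ℕ}
    (h : ∀ L, (t.subst x u).typings L = biUnionHom (substWeight x u) (t.typings L))
    (m : Multiset LType) :
    (t.subst x u).multiTypings m = biUnionHom (substWeight x u) (t.multiTypings m) := by
  simp only [multiTypings, map_multiset_sum, Multiset.map_map, Function.comp_def, ← h]

theorem typings_subst (t : CTerm) (x : ℕ) (u : CTerm) (L : LType) :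
    (t.subst x u).typings L = biUnionHom (substWeight x u) (t.typings L) := by
  induction t generalizing x u L with
  | var y => rw [typings_subst_var, typings_var, biUnionHom_singleton]
  | lam p t ih =>
    simp only [subst, typings_lam, ih, biUnionHom_iUnion, preimage_cons_biUnionHom_substWeight]
  | app q t s iht ihs =>
    simp only [subst, typings_app, iht, multiTypings_subst_of_typings (ihs x u), biUnionHom_iUnion,
      map_add, biUnionHom_singleton, substWeight_app]

theorem typings_subst_zero (t u : CTerm) (L : LType) :
    (t.subst 0 u).typings L =
      ⋃ M : List LType, Weight.cons M ⁻¹' t.typings L + u.multiTypings M := by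
  rw [typings_subst]
  ext w
  simp only [mem_biUnionHom, Set.mem_iUnion]
  constructor
  · rintro ⟨v, hv, hw⟩
    obtain ⟨m, v, rfl⟩ := v.exists_eq_cons
    obtain ⟨M, rfl⟩ := Quot.exists_rep m
    obtain ⟨_, rfl, b, hb, rfl⟩ := hw
    exact ⟨M, v, hv, b, hb, rfl⟩
  · rintro ⟨M, v, hv, b, hb, rfl⟩
    exact ⟨v.cons M, hv, v, rfl, b, hb, rfl⟩

theorem typings_lam_arrow (p p' q : Player) (t : CTerm) (M : List LType) (L : LType) :
    (lam p t).typings (.arrow M p' q L) = ⋃ _ : p' = p, Weight.cons M ⁻¹' t.typings L := by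
  ext w
  simp [typings_lam]

theorem typings_beta (p q : Player) (t u : CTerm) (L : LType) :
    (app q (lam p t) u).typings L = (t.subst 0 u).typings L + {Weight.app (p.gamma q)} := by
  simp only [typings_app, typings_lam_arrow, typings_subst_zero, Set.iUnion_add,
    Set.iUnion_iUnion_eq_left]

end CTerm

theorem CSpine.typings_eq {t' : CTerm} (h : CSpine (BetaRoot k) t t') (L : LType) :
    t.typings L = t'.typings L + {Weight.app k} := by
  induction h generalizing L with
  | root h =>
    obtain ⟨p, q, t, u⟩ := h
    exact t.typings_beta p q u L
  | appL q u _ ih =>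
    simp only [CTerm.typings_app, ih, Set.iUnion_add, add_right_comm _ {Weight.app k}]

theorem CHead.typings_eq {t' : CTerm} (h : CHead (BetaRoot k) t t') (L : LType) :
    t.typings L = t'.typings L + {Weight.app k} := by
  induction h generalizing L with
  | spine h => exact h.typings_eq L
  | lam p _ ih =>
    simp only [CTerm.typings_lam, ih, Weight.preimage_cons_add_app, Set.iUnion_add]

theorem Deriv.subject_reduction {j : ℕ} {t' : CTerm} (h : CHead (BetaRoot j) t t')
    (π : Deriv Γ k t L) :
    ∃ (k' : ℕ) (π' : Deriv Γ k' t' L), π'.size + 1 = π.size ∧ k' + j = k := by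
  have hπ : π.weight ∈ t.typings L := ⟨Γ, k, π, rfl⟩
  rw [h.typings_eq, Set.add_singleton] at hπ
  obtain ⟨_, ⟨Γ', k', π', rfl⟩, hw⟩ := hπ
  obtain ⟨rfl, hk, hsize⟩ : Γ' = Γ ∧ k' + j = k ∧ π'.size + 1 = π.size := by
    simpa [weight, Weight.app] using hw
  exact ⟨k', π', hsize, hk⟩

theorem Deriv.subject_expansion {j : ℕ} {t' : CTerm} (h : CHead (BetaRoot j) t t')
    (π' : Deriv Γ k t' L) : ∃ π : Deriv Γ (k + j) t L, π.size = π'.size + 1 := by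
  have hπ' : π'.weight + Weight.app j ∈ t.typings L := by
    rw [h.typings_eq]
    exact Set.add_mem_add ⟨Γ, k, π', rfl⟩ rfl
  obtain ⟨Γ', k', π, hw⟩ := hπ'
  obtain ⟨rfl, rfl, hsize⟩ : Γ' = Γ ∧ k' = k + j ∧ π.size = π'.size + 1 := by
    simpa [weight, Weight.app] using hw
  exact ⟨π, hsize⟩

end Interpretation

/-- Quantitative subject reduction and subject expansion for checkers multi types,
along a checkers head step `t →hch t'`. -/
theorem checkers_subject_reduction_and_expansion (t t' : CTerm) (h : HStepCh t t') :
    (∀ (Γ : TEnv) (k : ℕ) (L : LType) (π : Deriv Γ k t L),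
      ∃ (k' : ℕ) (π' : Deriv Γ k' t' L),
        π'.size + 1 = π.size ∧
        (HStepTau t t' → k' = k) ∧
        (HStepInt t t' → k' + 1 = k)) ∧
    (∀ (Γ : TEnv) (k' : ℕ) (L : LType), Nonempty (Deriv Γ k' t' L) →
      ∃ k : ℕ, Nonempty (Deriv Γ k t L)) := by
  have hτ : HStepTau t t' → CHead (BetaRoot 0) t t' := CHead.mono SilentRoot.betaRoot
  have hi : HStepInt t t' → CHead (BetaRoot 1) t t' := CHead.mono InterRoot.betaRoot
  obtain ⟨j, hj⟩ : ∃ j, CHead (BetaRoot j) t t' := h.elim (⟨0, hτ ·⟩) (⟨1, hi ·⟩)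
  constructor
  · intro Γ k L π
    obtain ⟨k', π', hsize, rfl⟩ := π.subject_reduction hj
    refine ⟨k', π', hsize, fun h0 => ?_, fun h1 => ?_⟩
    · rw [hj.interactions_unique (hτ h0), add_zero]
    · rw [hj.interactions_unique (hi h1)]
  · rintro Γ k' L ⟨π'⟩
    obtain ⟨π, -⟩ := π'.subject_expansion hj
    exact ⟨k' + j, ⟨π⟩⟩
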